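/- arXiv:1912.04177 — 7 statements merged into one kernel-verified Lean document; each statement's English description precedes it below -/
import Mathlib

section
/- Let A be a real symmetric n×n matrix with spectral decomposition A = Σᵢ λᵢ uᵢuᵢᵀ, where the eigenvalues are ordered by decreasing absolute value |λ₁| ≥ |λ₂| ≥ … ≥ |λₙ| and u₁,…,uₙ are orthonormal eigenvectors, and let A_k = Σ_{i=1}^k λᵢ uᵢuᵢᵀ be the rank-k spectral truncation. Let k ≥ 1 be an integer, ε > 0, and let P ∈ ℝ^{n×n} be an orthogonal projection (P = Pᵀ = P²) satisfying ‖A (I − P)‖₂² ≤ (ε/k) · ‖A − A_k‖_F². Then ‖A − P A_k P‖_F² ≤ (1 + 6ε) · ‖A − A_k‖_F². -/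
open Matrix

noncomputable def frobeniusSq {m n : ℕ} (M : Matrix (Fin m) (Fin n) ℝ) : ℝ :=
  ∑ i, ∑ j, (M i j)^2

noncomputable def opNorm2 {m n : ℕ} (M : Matrix (Fin m) (Fin n) ℝ) : ℝ :=
  ‖LinearMap.toContinuousLinearMap (Matrix.toEuclideanLin M)‖

/-!
Write `A_k = A * E` with `E` the orthogonal projection onto the leading eigenvectors, and put
`B = A * E`, `C = A - B`, `Q = 1 - P`. Since `B` and `C` annihilate each other, expanding
`A - P * B * P = C + (B - P * B * P)` gives
`‖A - P * B * P‖_F² = ‖C‖_F² - 2 * tr (C * Q * B * Q) + ‖B - P * B * P‖_F²`.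
Both error terms are controlled by `E * A * Q` and `A * Q * E`, whose squared Frobenius norms are
at most `‖A * Q‖₂² * ‖E‖_F² ≤ k * ‖A * Q‖₂²`; in total the error is at most `4 * k * ‖A * Q‖₂²`.
-/

section Frobenius

variable {l m n : ℕ}

lemma frobeniusSq_nonneg (M : Matrix (Fin m) (Fin n) ℝ) : 0 ≤ frobeniusSq M :=
  Finset.sum_nonneg fun _ _ => Finset.sum_nonneg fun _ _ => sq_nonneg _

lemma frobeniusSq_eq_trace_transpose_mul_self (M : Matrix (Fin m) (Fin n) ℝ) :
    frobeniusSq M = (Mᵀ * M).trace := by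
  simp only [frobeniusSq, trace, diag_apply, mul_apply, transpose_apply, ← sq]
  exact Finset.sum_comm

lemma frobeniusSq_transpose (M : Matrix (Fin m) (Fin n) ℝ) : frobeniusSq Mᵀ = frobeniusSq M :=
  Finset.sum_comm

lemma frobeniusSq_add (M N : Matrix (Fin m) (Fin n) ℝ) :
    frobeniusSq (M + N) = frobeniusSq M + 2 * (Mᵀ * N).trace + frobeniusSq N := by
  have trace_swap : (Nᵀ * M).trace = (Mᵀ * N).trace := by
    rw [← trace_transpose, transpose_mul, transpose_transpose]
  simp only [frobeniusSq_eq_trace_transpose_mul_self, transpose_add, Matrix.add_mul,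
    Matrix.mul_add, trace_add, trace_swap]
  ring

lemma neg_two_mul_trace_mul_le (M : Matrix (Fin m) (Fin n) ℝ) (N : Matrix (Fin n) (Fin m) ℝ) :
    -2 * (M * N).trace ≤ frobeniusSq M + frobeniusSq N := by
  have h := frobeniusSq_nonneg (Mᵀ + N)
  rw [frobeniusSq_add, transpose_transpose, frobeniusSq_transpose] at h
  linarith

open scoped Matrix.Norms.L2Operator in
lemma sum_sq_mulVec_le (M : Matrix (Fin m) (Fin n) ℝ) (v : Fin n → ℝ) :
    ∑ i, (M *ᵥ v) i ^ 2 ≤ opNorm2 M ^ 2 * ∑ j, v j ^ 2 := by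
  have h := pow_le_pow_left₀ (norm_nonneg _) (l2_opNorm_mulVec M (WithLp.toLp 2 v)) 2
  simpa only [mul_pow, EuclideanSpace.real_norm_sq_eq] using! h

lemma frobeniusSq_mul_le_opNorm2_sq_mul (M : Matrix (Fin l) (Fin m) ℝ)
    (N : Matrix (Fin m) (Fin n) ℝ) :
    frobeniusSq (M * N) ≤ opNorm2 M ^ 2 * frobeniusSq N := by
  rw [← frobeniusSq_transpose, ← frobeniusSq_transpose N, frobeniusSq, frobeniusSq, Finset.mul_sum]
  exact Finset.sum_le_sum fun j _ => sum_sq_mulVec_le M (N.col j)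

open scoped Matrix.Norms.L2Operator in
lemma opNorm2_transpose (M : Matrix (Fin m) (Fin n) ℝ) : opNorm2 Mᵀ = opNorm2 M :=
  l2_opNorm_conjTranspose M

lemma frobeniusSq_mul_le_mul_opNorm2_sq (M : Matrix (Fin l) (Fin m) ℝ)
    (N : Matrix (Fin m) (Fin n) ℝ) :
    frobeniusSq (M * N) ≤ opNorm2 N ^ 2 * frobeniusSq M := by
  have h := frobeniusSq_mul_le_opNorm2_sq_mul Nᵀ Mᵀ
  rwa [← transpose_mul, frobeniusSq_transpose, frobeniusSq_transpose, opNorm2_transpose] at h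

end Frobenius

section Projection

variable {m n : ℕ} {P : Matrix (Fin m) (Fin m) ℝ}

lemma frobeniusSq_eq_trace_of_isStarProjection (hP : IsStarProjection P) :
    frobeniusSq P = P.trace := by
  have hPt : Pᵀ = P := hP.isSelfAdjoint
  rw [frobeniusSq_eq_trace_transpose_mul_self, hPt, hP.isIdempotentElem.eq]

lemma frobeniusSq_eq_add_of_isStarProjection (hP : IsStarProjection P)
    (M : Matrix (Fin m) (Fin n) ℝ) :
    frobeniusSq M = frobeniusSq (P * M) + frobeniusSq ((1 - P) * M) := by
  have hPt : Pᵀ = P := hP.isSelfAdjoint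
  have orthogonal : (P * M)ᵀ * ((1 - P) * M) = 0 := by
    rw [transpose_mul, hPt, Matrix.mul_assoc, ← Matrix.mul_assoc P, hP.mul_one_sub_self,
      Matrix.zero_mul, Matrix.mul_zero]
  have h := frobeniusSq_add (P * M) ((1 - P) * M)
  rwa [← Matrix.add_mul, add_sub_cancel, Matrix.one_mul, orthogonal, trace_zero, mul_zero,
    add_zero] at h

lemma frobeniusSq_isStarProjection_mul_le (hP : IsStarProjection P)
    (M : Matrix (Fin m) (Fin n) ℝ) :
    frobeniusSq (P * M) ≤ frobeniusSq M := by
  rw [frobeniusSq_eq_add_of_isStarProjection hP M]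
  exact le_add_of_nonneg_right (frobeniusSq_nonneg _)

lemma frobeniusSq_sub_compression_le (hP : IsStarProjection P) (B : Matrix (Fin m) (Fin m) ℝ) :
    frobeniusSq (B - P * B * P) ≤
      frobeniusSq (B * (1 - P)) + frobeniusSq ((1 - P) * B) := by
  have proj_mul : P * (B - P * B * P) = P * (B * (1 - P)) := by
    simp only [mul_sub, mul_one, ← mul_assoc, hP.isIdempotentElem.eq]
  have compl_mul : (1 - P) * (B - P * B * P) = (1 - P) * B := by
    rw [mul_sub, ← mul_assoc, ← mul_assoc, hP.one_sub_mul_self, zero_mul, zero_mul, sub_zero]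
  rw [frobeniusSq_eq_add_of_isStarProjection hP, proj_mul, compl_mul]
  gcongr
  exact frobeniusSq_isStarProjection_mul_le hP _

end Projection

lemma trace_mul_sub_compression {m R : Type*} [Fintype m] [DecidableEq m] [CommRing R]
    {B C : Matrix m m R} (hBC : B * C = 0) (hCB : C * B = 0) (P : Matrix m m R) :
    (C * (B - P * B * P)).trace = -(C * (1 - P) * (B * (1 - P))).trace := by
  have trace_mid : (C * P * B).trace = 0 := by
    rw [trace_mul_comm, ← mul_assoc, hBC, zero_mul, trace_zero]
  simp only [mul_sub, sub_mul, mul_one, ← mul_assoc, hCB, trace_sub, trace_mid, zero_mul,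
    trace_zero]
  ring

section CommutingProjection

variable {n : ℕ} {A E P : Matrix (Fin n) (Fin n) ℝ}

lemma frobeniusSq_sub_compression_mul_eq (hA : A.IsSymm) (hE : IsStarProjection E)
    (hAE : Commute A E) (P : Matrix (Fin n) (Fin n) ℝ) :
    frobeniusSq (A - P * (A * E) * P) = frobeniusSq (A - A * E) -
      2 * ((A - A * E) * (1 - P) * (A * E * (1 - P))).trace +
      frobeniusSq (A * E - P * (A * E) * P) := by
  have hEt : Eᵀ = E := hE.isSelfAdjoint
  have residual_symm : (A - A * E)ᵀ = A - A * E := by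
    rw [transpose_sub, transpose_mul, hA.eq, hEt, hAE.eq]
  have truncation_sq : A * E * (A * E) = A * (A * E) := by
    rw [mul_assoc, ← mul_assoc E, ← hAE.eq, mul_assoc A E E, hE.isIdempotentElem.eq]
  have residual_mul : (A - A * E) * (A * E) = 0 := by
    rw [sub_mul, truncation_sq, sub_self]
  have mul_residual : A * E * (A - A * E) = 0 := by
    rw [mul_sub, truncation_sq, mul_assoc, ← hAE.eq, sub_self]
  rw [← sub_add_sub_cancel A (A * E) (P * (A * E) * P), frobeniusSq_add, residual_symm,
    trace_mul_sub_compression mul_residual residual_mul]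
  ring

lemma frobeniusSq_mul_sub_compression_mul_le (hA : A.IsSymm) (hE : IsStarProjection E)
    (hAE : Commute A E) (hP : IsStarProjection P) :
    frobeniusSq (A * E - P * (A * E) * P) ≤
      2 * (opNorm2 (A * (1 - P)) ^ 2 * frobeniusSq E) := by
  have hEt : Eᵀ = E := hE.isSelfAdjoint
  have hQt : (1 - P)ᵀ = 1 - P := hP.one_sub.isSelfAdjoint
  have right_le : frobeniusSq (A * E * (1 - P)) ≤ opNorm2 (A * (1 - P)) ^ 2 * frobeniusSq E := by
    rw [hAE.eq, mul_assoc]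
    exact frobeniusSq_mul_le_mul_opNorm2_sq _ _
  have left_eq : frobeniusSq ((1 - P) * (A * E)) = frobeniusSq (A * E * (1 - P)) := by
    rw [← frobeniusSq_transpose, transpose_mul, transpose_mul, hA.eq, hEt, hQt, hAE.eq]
  linarith [frobeniusSq_sub_compression_le hP (A * E)]

lemma neg_two_mul_trace_residual_mul_le (hE : IsStarProjection E) (hAE : Commute A E)
    (P : Matrix (Fin n) (Fin n) ℝ) :
    -2 * ((A - A * E) * (1 - P) * (A * E * (1 - P))).trace ≤
      2 * (opNorm2 (A * (1 - P)) ^ 2 * frobeniusSq E) := by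
  have factor : (A - A * E) * (1 - P) * (A * E * (1 - P)) =
      (1 - E) * (A * (1 - P) * E) * (E * (A * (1 - P))) := by
    rw [hAE.eq, ← one_sub_mul]
    simp only [mul_assoc]
    rw [← mul_assoc E E, hE.isIdempotentElem.eq]
  have left_le : frobeniusSq ((1 - E) * (A * (1 - P) * E)) ≤
      opNorm2 (A * (1 - P)) ^ 2 * frobeniusSq E :=
    (frobeniusSq_isStarProjection_mul_le hE.one_sub _).trans
      (frobeniusSq_mul_le_opNorm2_sq_mul _ _)
  have right_le : frobeniusSq (E * (A * (1 - P))) ≤ opNorm2 (A * (1 - P)) ^ 2 * frobeniusSq E :=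
    frobeniusSq_mul_le_mul_opNorm2_sq _ _
  rw [factor]
  linarith [neg_two_mul_trace_mul_le ((1 - E) * (A * (1 - P) * E)) (E * (A * (1 - P)))]

theorem frobeniusSq_sub_compression_mul_le (hA : A.IsSymm) (hE : IsStarProjection E)
    (hAE : Commute A E) (hP : IsStarProjection P) :
    frobeniusSq (A - P * (A * E) * P) ≤
      frobeniusSq (A - A * E) + 4 * (opNorm2 (A * (1 - P)) ^ 2 * frobeniusSq E) := by
  linarith [frobeniusSq_sub_compression_mul_eq hA hE hAE P,
    frobeniusSq_mul_sub_compression_mul_le hA hE hAE hP,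
    neg_two_mul_trace_residual_mul_le hE hAE P]

end CommutingProjection

section SpectralSum

variable {ι m R : Type*} [CommSemiring R]

/-- The partial spectral sum `∑ i ∈ s, c i • u i (u i)ᵀ` with weights `c`. For an orthonormal
family `u`, `s = univ` gives a spectral decomposition, a smaller `s` gives its truncation, and
`c = 1` gives the orthogonal projection onto the span of the `u i`, `i ∈ s`. -/
def spectralSum (u : ι → m → R) (c : ι → R) (s : Finset ι) : Matrix m m R :=
  ∑ i ∈ s, c i • vecMulVec (u i) (u i)

lemma transpose_spectralSum (u : ι → m → R) (c : ι → R) (s : Finset ι) :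
    (spectralSum u c s)ᵀ = spectralSum u c s := by
  simp only [spectralSum, transpose_sum, transpose_smul, transpose_vecMulVec]

variable [Fintype m] [DecidableEq ι] {u : ι → m → R}

lemma spectralSum_mul_spectralSum (hu : ∀ i j, u i ⬝ᵥ u j = if i = j then 1 else 0)
    (c d : ι → R) (s t : Finset ι) :
    spectralSum u c s * spectralSum u d t = spectralSum u (c * d) (s ∩ t) := by
  have mul_term (i j : ι) : c i • vecMulVec (u i) (u i) * d j • vecMulVec (u j) (u j) =
      if i = j then (c * d) i • vecMulVec (u i) (u i) else 0 := by
    rw [Matrix.smul_mul, Matrix.mul_smul, vecMulVec_mul_vecMulVec, hu, smul_smul]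
    split_ifs with hij
    · simp [hij]
    · simp
  simp only [spectralSum, Finset.sum_mul_sum, mul_term, Finset.sum_ite_eq, ← Finset.sum_filter,
    Finset.filter_mem_eq_inter]

lemma trace_spectralSum (hu : ∀ i j, u i ⬝ᵥ u j = if i = j then 1 else 0)
    (c : ι → R) (s : Finset ι) :
    (spectralSum u c s).trace = ∑ i ∈ s, c i := by
  simp only [spectralSum, trace_sum, trace_smul, trace_vecMulVec, hu, if_true, smul_eq_mul,
    mul_one]

end SpectralSum

lemma isStarProjection_spectralSum_one {ι m : Type*} [Fintype m] [DecidableEq ι] {u : ι → m → ℝ}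
    (hu : ∀ i j, u i ⬝ᵥ u j = if i = j then 1 else 0) (s : Finset ι) :
    IsStarProjection (spectralSum u 1 s) where
  isIdempotentElem := by
    rw [IsIdempotentElem, spectralSum_mul_spectralSum hu, mul_one, Finset.inter_self]
  isSelfAdjoint := transpose_spectralSum u 1 s

theorem sf_projection_to_lra_symm_general {n : ℕ} {ι : Type*} [Fintype ι] [DecidableEq ι]
    (A : Matrix (Fin n) (Fin n) ℝ) (lam : ι → ℝ) (u : ι → Fin n → ℝ)
    (hortho : ∀ i j, u i ⬝ᵥ u j = if i = j then (1 : ℝ) else 0)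
    (hA : A = spectralSum u lam Finset.univ) (s : Finset ι)
    (k : ℕ) (hk : 1 ≤ k) (hs : s.card ≤ k) (ε : ℝ)
    (P : Matrix (Fin n) (Fin n) ℝ) (hP : IsStarProjection P)
    (hAP : opNorm2 (A * (1 - P)) ^ 2 ≤ ε / k * frobeniusSq (A - spectralSum u lam s)) :
    frobeniusSq (A - P * spectralSum u lam s * P) ≤
      (1 + 4 * ε) * frobeniusSq (A - spectralSum u lam s) := by
  set E := spectralSum u 1 s
  have hE : IsStarProjection E := isStarProjection_spectralSum_one hortho s
  have hAE : A * E = spectralSum u lam s := by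
    rw [hA, spectralSum_mul_spectralSum hortho, mul_one, Finset.univ_inter]
  have hEA : E * A = spectralSum u lam s := by
    rw [hA, spectralSum_mul_spectralSum hortho, one_mul, Finset.inter_univ]
  have hA_symm : A.IsSymm := hA ▸ transpose_spectralSum u lam Finset.univ
  have frobeniusSq_E_le : frobeniusSq E ≤ k := by
    rw [frobeniusSq_eq_trace_of_isStarProjection hE, trace_spectralSum hortho]
    simpa using hs
  have error_le : opNorm2 (A * (1 - P)) ^ 2 * frobeniusSq E ≤
      ε * frobeniusSq (A - spectralSum u lam s) := calc
    _ ≤ ε / k * frobeniusSq (A - spectralSum u lam s) * k :=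
      mul_le_mul hAP frobeniusSq_E_le (frobeniusSq_nonneg E) ((sq_nonneg _).trans hAP)
    _ = ε * frobeniusSq (A - spectralSum u lam s) := by field_simp
  have key := frobeniusSq_sub_compression_mul_le hA_symm hE (hAE.trans hEA.symm) hP
  rw [hAE] at key
  linarith

/-- Structured projections give low-rank approximation for symmetric matrices,
with constant (1 + 6ε). -/
theorem sf_projection_to_lra_symm {n : ℕ} (A : Matrix (Fin n) (Fin n) ℝ)
    (lam : Fin n → ℝ) (u : Fin n → (Fin n → ℝ))
    (hmono : Antitone (fun i => |lam i|))
    (hortho : ∀ i j, u i ⬝ᵥ u j = if i = j then (1:ℝ) else 0)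
    (hA : A = ∑ i, lam i • Matrix.vecMulVec (u i) (u i))
    (k : ℕ) (hk : 1 ≤ k) (ε : ℝ) (hε : 0 < ε)
    (Ak : Matrix (Fin n) (Fin n) ℝ)
    (hAk : Ak = ∑ i ∈ Finset.univ.filter (fun i : Fin n => (i : ℕ) < k),
      lam i • Matrix.vecMulVec (u i) (u i))
    (P : Matrix (Fin n) (Fin n) ℝ) (hPsymm : Pᵀ = P) (hPproj : P * P = P)
    (hP : (opNorm2 (A * (1 - P)))^2 ≤ (ε / k) * frobeniusSq (A - Ak)) :
    frobeniusSq (A - P * Ak * P) ≤ (1 + 6 * ε) * frobeniusSq (A - Ak) := by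
  subst hAk
  exact (sf_projection_to_lra_symm_general A lam u hortho hA _ k hk
    (Fin.card_filter_val_lt.trans_le (min_le_right n k)) ε P ⟨hPproj, hPsymm⟩ hP).trans
      (mul_le_mul_of_nonneg_right (by linarith) (frobeniusSq_nonneg _))
end

section
/- Let x₁,…,xₙ ∈ ℝ^d and define A ∈ ℝ^{n×n} by A_{ij} = ‖xᵢ − xⱼ‖₂², B by B_{ij} = ⟨xᵢ, xⱼ⟩, and v ∈ ℝⁿ by vᵢ = ‖xᵢ‖₂², so that A = v𝟙ᵀ + 𝟙vᵀ − 2B, where 𝟙 is the all-ones vector. Then for every integer k ≥ 0 and every matrix M ∈ ℝ^{n×n} with rank(M) ≤ k, ‖A − M‖_F ≥ 2 · inf{ ‖B − M'‖_F : M' ∈ ℝ^{n×n}, rank(M') ≤ k+2 }. -/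
open Matrix

/-! Since `A + 2B = v𝟙ᵀ + 𝟙vᵀ` has rank at most `2`, every approximation `M` of `A` of rank at most
`k` yields the approximation `M' = (v𝟙ᵀ + 𝟙vᵀ - M) / 2` of `B` of rank at most `k + 2`, and
`A - M = -2 (B - M')`. The same works whenever `A - cB` has small rank. -/

section Rank

variable {m n K : Type*} [Fintype n] [Field K]

theorem matrix_rank_add_le (P Q : Matrix m n K) : (P + Q).rank ≤ P.rank + Q.rank := by
  unfold Matrix.rank
  rw [mulVecLin_add]
  exact (Submodule.finrank_mono (LinearMap.range_add_le _ _)).trans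
    (Submodule.finrank_add_le_finrank_add_finrank _ _)

theorem matrix_rank_smul_of_ne_zero {c : K} (hc : c ≠ 0) (P : Matrix m n K) :
    (c • P).rank = P.rank :=
  rank_smul_of_mem_nonZeroDivisors P (mem_nonZeroDivisors_of_ne_zero hc)

theorem matrix_rank_le_two_of_apply_eq_add {P : Matrix m n K} {u : m → K} {w : n → K}
    (hP : ∀ i j, P i j = u i + w j) : P.rank ≤ 2 := by
  have hP_sum : P = vecMulVec u 1 + vecMulVec 1 w := by
    ext i j
    simp [hP]
  calc P.rank ≤ (vecMulVec u (1 : n → K)).rank + (vecMulVec (1 : m → K) w).rank :=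
        hP_sum ▸ matrix_rank_add_le _ _
    _ ≤ 1 + 1 := add_le_add (rank_vecMulVec_le _ _) (rank_vecMulVec_le _ _)

end Rank

theorem sum_sub_sq_eq {ι R : Type*} [CommRing R] (s : Finset ι) (f g : ι → R) :
    ∑ i ∈ s, (f i - g i) ^ 2 =
      ∑ i ∈ s, f i ^ 2 + ∑ i ∈ s, g i ^ 2 - 2 * ∑ i ∈ s, f i * g i := by
  rw [Finset.mul_sum, ← Finset.sum_add_distrib, ← Finset.sum_sub_distrib]
  exact Finset.sum_congr rfl fun i _ => by ring

section LowRankApproximation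

variable {m n : ℕ}

theorem sqrt_frobeniusSq_smul (c : ℝ) (M : Matrix (Fin m) (Fin n) ℝ) :
    √(frobeniusSq (c • M)) = |c| * √(frobeniusSq M) := by
  have frobeniusSq_smul : frobeniusSq (c • M) = c ^ 2 * frobeniusSq M := by
    simp only [frobeniusSq, Matrix.smul_apply, smul_eq_mul, mul_pow, Finset.mul_sum]
  rw [frobeniusSq_smul, Real.sqrt_mul (sq_nonneg c), Real.sqrt_sq_eq_abs]

/-- The Frobenius distance from `B` to the matrices of rank at most `k`, as an infimum in `ℝ` of a
set that is nonempty (it contains the distance to `0`) and bounded below by `0`. -/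
noncomputable def lowRankError (B : Matrix (Fin m) (Fin n) ℝ) (k : ℕ) : ℝ :=
  sInf {r : ℝ | ∃ M' : Matrix (Fin m) (Fin n) ℝ, M'.rank ≤ k ∧ r = √(frobeniusSq (B - M'))}

theorem lowRankError_le (B : Matrix (Fin m) (Fin n) ℝ) {M' : Matrix (Fin m) (Fin n) ℝ} {k : ℕ}
    (hM' : M'.rank ≤ k) : lowRankError B k ≤ √(frobeniusSq (B - M')) := by
  refine csInf_le ⟨0, ?_⟩ ⟨M', hM', rfl⟩
  rintro _ ⟨N, -, rfl⟩
  exact Real.sqrt_nonneg _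

theorem distance_matrix_lra_lower_bound_general {A B M : Matrix (Fin m) (Fin n) ℝ} {c : ℝ}
    {k s : ℕ} (hAB : (A - c • B).rank ≤ s) (hM : M.rank ≤ k) :
    |c| * lowRankError B (k + s) ≤ √(frobeniusSq (A - M)) := by
  rcases eq_or_ne c 0 with rfl | hc
  · simp
  set M' := c⁻¹ • M + (-c⁻¹) • (A - c • B)
  have hM' : M'.rank ≤ k + s := by
    refine (matrix_rank_add_le _ _).trans ?_
    rw [matrix_rank_smul_of_ne_zero (inv_ne_zero hc),
      matrix_rank_smul_of_ne_zero (neg_ne_zero.mpr (inv_ne_zero hc))]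
    exact add_le_add hM hAB
  have hAM : A - M = c • (B - M') := by
    have hcM' : c • M' = M - (A - c • B) := by
      rw [smul_add, neg_smul, smul_neg, smul_inv_smul₀ hc, smul_inv_smul₀ hc, ← sub_eq_add_neg]
    rw [smul_sub, hcM']
    abel
  calc |c| * lowRankError B (k + s) ≤ |c| * √(frobeniusSq (B - M')) := by
        gcongr
        exact lowRankError_le B hM'
    _ = √(frobeniusSq (A - M)) := by rw [hAM, sqrt_frobeniusSq_smul]

end LowRankApproximation

/-- For a negative-type distance matrix A with Gram matrix B, any rank-k approximation
error of A is at least twice the best rank-(k+2) approximation error of B. -/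
theorem distance_matrix_lra_lower_bound {n d : ℕ} (x : Fin n → (Fin d → ℝ))
    (A B : Matrix (Fin n) (Fin n) ℝ) (v : Fin n → ℝ)
    (hAdef : ∀ i j, A i j = ∑ l, (x i l - x j l)^2)
    (hBdef : ∀ i j, B i j = ∑ l, (x i l) * (x j l))
    (hvdef : ∀ i, v i = ∑ l, (x i l)^2)
    (k : ℕ) (M : Matrix (Fin n) (Fin n) ℝ) (hM : M.rank ≤ k) :
    2 * sInf {r : ℝ | ∃ M' : Matrix (Fin n) (Fin n) ℝ,
        M'.rank ≤ k + 2 ∧ r = Real.sqrt (frobeniusSq (B - M'))} ≤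
      Real.sqrt (frobeniusSq (A - M)) := by
  have hAB : (A - (-2 : ℝ) • B).rank ≤ 2 :=
    matrix_rank_le_two_of_apply_eq_add (u := v) (w := v) fun i j => by
      simp [hAdef, hBdef, hvdef, sum_sub_sq_eq]
  simpa [lowRankError] using distance_matrix_lra_lower_bound_general hAB hM
end

section
/- Let A be an n×n real positive semidefinite matrix with eigenvalues λ₁ ≥ λ₂ ≥ … ≥ λₙ ≥ 0, let λ > 0, and let s_λ = Σ_{i=1}^n λᵢ² / (λᵢ² + λ) be the statistical dimension of A at regularization λ. Then for every integer k with 0 ≤ k < n, the tail sum of squared eigenvalues satisfies Σ_{i=k+1}^n λᵢ² ≤ s_λ · (λ_{k+1}² + λ). -/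
open Matrix

section LinearOrderedField

variable {𝕜 : Type*} [Field 𝕜] [LinearOrder 𝕜] [IsStrictOrderedRing 𝕜]

theorem le_div_add_mul_add_of_le {x y c : 𝕜} (hx : 0 ≤ x) (hc : 0 < c) (hxy : x ≤ y) :
    x ≤ x / (x + c) * (y + c) := by
  have hxc : 0 < x + c := by positivity
  calc
    x = x / (x + c) * (x + c) := (div_mul_cancel₀ x hxc.ne').symm
    _ ≤ x / (x + c) * (y + c) := by gcongr

theorem sum_le_sum_div_add_mul_add_of_subset {ι : Type*} {s t : Finset ι} {f : ι → 𝕜} {c M : 𝕜}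
    (hst : s ⊆ t) (hf : ∀ i ∈ t, 0 ≤ f i) (hc : 0 < c) (hM : 0 ≤ M) (hfM : ∀ i ∈ s, f i ≤ M) :
    ∑ i ∈ s, f i ≤ (∑ i ∈ t, f i / (f i + c)) * (M + c) := by
  have hratio : ∀ i ∈ t, 0 ≤ f i / (f i + c) := fun i hi ↦
    div_nonneg (hf i hi) (add_nonneg (hf i hi) hc.le)
  calc
    ∑ i ∈ s, f i ≤ ∑ i ∈ s, f i / (f i + c) * (M + c) :=
      Finset.sum_le_sum fun i hi ↦ le_div_add_mul_add_of_le (hf i (hst hi)) hc (hfM i hi)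
    _ = (∑ i ∈ s, f i / (f i + c)) * (M + c) := (Finset.sum_mul ..).symm
    _ ≤ (∑ i ∈ t, f i / (f i + c)) * (M + c) := by
      gcongr ?_ * (M + c)
      exact Finset.sum_le_sum_of_subset_of_nonneg hst fun i hi _ ↦ hratio i hi

theorem tail_eigenvalue_sum_le_statDim_general {ι : Type*} [Fintype ι] [Preorder ι]
    [DecidableLE ι] {lam : ι → 𝕜} (hmono : Antitone lam) (hnonneg : ∀ i, 0 ≤ lam i)
    {lamreg : 𝕜} (hlamreg : 0 < lamreg) (k : ι) :
    ∑ i with k ≤ i, lam i ^ 2 ≤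
      (∑ i, lam i ^ 2 / (lam i ^ 2 + lamreg)) * (lam k ^ 2 + lamreg) := by
  have hsq_le : ∀ i, k ≤ i → lam i ^ 2 ≤ lam k ^ 2 := fun i hki ↦
    pow_le_pow_left₀ (hnonneg i) (hmono hki) 2
  exact sum_le_sum_div_add_mul_add_of_subset (Finset.filter_subset _ _)
    (fun i _ ↦ sq_nonneg (lam i)) hlamreg (sq_nonneg (lam k))
    fun i hi ↦ hsq_le i (Finset.mem_filter.mp hi).2

end LinearOrderedField

/-- Tail sum of squared eigenvalues of a PSD matrix is bounded by the statistical
dimension times (λ_{k+1}² + λ). -/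
theorem tail_eigenvalue_sum_le_statDim {n : ℕ} (A : Matrix (Fin n) (Fin n) ℝ)
    (lam : Fin n → ℝ) (u : Fin n → (Fin n → ℝ))
    (hmono : Antitone lam) (hnonneg : ∀ i, 0 ≤ lam i)
    (hortho : ∀ i j, u i ⬝ᵥ u j = if i = j then (1:ℝ) else 0)
    (hA : A = ∑ i, lam i • Matrix.vecMulVec (u i) (u i))
    (lamreg : ℝ) (hlamreg : 0 < lamreg)
    (s : ℝ) (hs : s = ∑ i, (lam i)^2 / ((lam i)^2 + lamreg))
    (k : ℕ) (hk : k < n) :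
    ∑ i ∈ Finset.univ.filter (fun i : Fin n => k ≤ (i : ℕ)), (lam i)^2 ≤
      s * ((lam ⟨k, hk⟩)^2 + lamreg) := by
  subst hs
  exact tail_eigenvalue_sum_le_statDim_general hmono hnonneg hlamreg ⟨k, hk⟩
end

section
/- Let A be an n×n real positive semidefinite matrix with eigenvalues λ₁ ≥ λ₂ ≥ … ≥ λₙ ≥ 0, let λ > 0, and let s_λ = Σ_{i=1}^n λᵢ² / (λᵢ² + λ). Let 0 < ε < 1 and let k be an integer with 0 ≤ k < n and (k+1) · ε² ≥ s_λ. Then λ_{k+1}² ≤ ε² λ / (1 − ε²). -/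
open Matrix

/-!
Since `x ↦ x / (x + λ)` is increasing on `[0, ∞)`, each of the first `k + 1` terms of `s_λ` is at
least the `(k+1)`-st, so `(k + 1) · λ_{k+1}² / (λ_{k+1}² + λ) ≤ s_λ ≤ (k + 1) · ε²`. Cancelling
`k + 1` and solving for `λ_{k+1}²` gives the bound.
-/

section

variable {ι M : Type*} [Fintype ι] [Preorder ι] [LocallyFiniteOrderBot ι]
  [AddCommMonoid M] [PartialOrder M] [IsOrderedAddMonoid M]

theorem card_Iic_nsmul_le_sum_of_antitone {f : ι → M} (hf : Antitone f) (hf₀ : ∀ i, 0 ≤ f i)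
    (k : ι) : (Finset.Iic k).card • f k ≤ ∑ i, f i :=
  calc (Finset.Iic k).card • f k
      ≤ ∑ i ∈ Finset.Iic k, f i :=
        Finset.card_nsmul_le_sum _ _ _ fun _ hi ↦ hf (Finset.mem_Iic.mp hi)
    _ ≤ ∑ i, f i :=
        Finset.sum_le_sum_of_subset_of_nonneg (Finset.subset_univ _) fun i _ _ ↦ hf₀ i

end

section

variable {K : Type*} [Field K] [LinearOrder K] [IsStrictOrderedRing K]

theorem div_add_const_le_div_add_const {c x y : K} (hc : 0 ≤ c) (hx : 0 < x + c) (hxy : x ≤ y) :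
    x / (x + c) ≤ y / (y + c) := by
  rw [div_le_div_iff₀ hx (by linarith)]
  linarith [mul_le_mul_of_nonneg_right hxy hc]

theorem div_add_const_le_iff_le_mul_div_one_sub {c t x : K} (hx : 0 < x + c) (ht : t < 1) :
    x / (x + c) ≤ t ↔ x ≤ t * c / (1 - t) := by
  rw [div_le_iff₀ hx, le_div_iff₀ (sub_pos.mpr ht)]
  constructor <;> intro h <;> linarith

variable {ι : Type*} [Fintype ι] [Preorder ι] [LocallyFiniteOrderBot ι]

theorem eigenvalue_bound_from_statDim_general {lam : ι → K} (hlam : Antitone lam)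
    (hlam₀ : ∀ i, 0 ≤ lam i) {c : K} (hc : 0 < c) {t : K} (ht : t < 1) {k : ι}
    (hs : ∑ i, lam i ^ 2 / (lam i ^ 2 + c) ≤ (Finset.Iic k).card * t) :
    lam k ^ 2 ≤ t * c / (1 - t) := by
  have hden : ∀ i, 0 < lam i ^ 2 + c := fun i ↦ by positivity
  have hterm_antitone : Antitone fun i ↦ lam i ^ 2 / (lam i ^ 2 + c) := fun i j hij ↦
    div_add_const_le_div_add_const hc.le (hden j) (pow_le_pow_left₀ (hlam₀ j) (hlam hij) 2)
  have hterm_nonneg : ∀ i, 0 ≤ lam i ^ 2 / (lam i ^ 2 + c) := fun i ↦ by positivity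
  have hcard_pos : (0 : K) < (Finset.Iic k).card := by
    exact_mod_cast Finset.card_pos.mpr Finset.nonempty_Iic
  have hcard_mul :
      (Finset.Iic k).card * (lam k ^ 2 / (lam k ^ 2 + c)) ≤ (Finset.Iic k).card * t := by
    rw [← nsmul_eq_mul]
    exact (card_Iic_nsmul_le_sum_of_antitone hterm_antitone hterm_nonneg k).trans hs
  exact (div_add_const_le_iff_le_mul_div_one_sub (hden k) ht).mp
    (le_of_mul_le_mul_left hcard_mul hcard_pos)

end

/-- If (k+1)·ε² ≥ s_λ then the (k+1)-st eigenvalue of a PSD matrix satisfies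
λ_{k+1}² ≤ ε²λ/(1−ε²). -/
theorem eigenvalue_bound_from_statDim {n : ℕ} (A : Matrix (Fin n) (Fin n) ℝ)
    (lam : Fin n → ℝ) (u : Fin n → (Fin n → ℝ))
    (hmono : Antitone lam) (hnonneg : ∀ i, 0 ≤ lam i)
    (hortho : ∀ i j, u i ⬝ᵥ u j = if i = j then (1:ℝ) else 0)
    (hA : A = ∑ i, lam i • Matrix.vecMulVec (u i) (u i))
    (lamreg : ℝ) (hlamreg : 0 < lamreg)
    (s : ℝ) (hs : s = ∑ i, (lam i)^2 / ((lam i)^2 + lamreg))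
    (ε : ℝ) (hε : 0 < ε) (hε1 : ε < 1)
    (k : ℕ) (hk : k < n) (hks : s ≤ ((k : ℝ) + 1) * ε^2) :
    (lam ⟨k, hk⟩)^2 ≤ ε^2 * lamreg / (1 - ε^2) := by
  have hε_sq : ε ^ 2 < 1 := pow_lt_one₀ hε.le hε1 two_ne_zero
  exact eigenvalue_bound_from_statDim_general hmono hnonneg hlamreg hε_sq
    (by simpa [← hs] using hks)
end

section
/- Let A, N, B, M be real n×n matrices and let 0 < ε ≤ 1 and 0 < η ≤ 1. Suppose ‖N‖_F² ≤ η ‖A‖_F², that ‖A − B‖_F ≤ ‖A‖_F, and that ‖(A+N) − M‖_F² ≤ ‖(A+N) − B‖_F² + ε ‖A+N‖_F². Then ‖A − M‖_F² ≤ ‖A − B‖_F² + 16(ε + √η) · ‖A‖_F². -/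
open Matrix

/-!
Only the triangle inequality is needed. Measure everything in units of `‖A‖` and write `δ = √η`.
Adding noise of size `δ` to a vector of size at most `c` raises its squared norm by at most
`2cδ + δ² ≤ (2c + 1)δ`. This is paid once with `c = 1`, to pass from `A - B` to `A + N - B`, and
once with `c = 2 + ε`, to pass from `A + N - M` back to `A - M`; the approximation guarantee in
between costs `ε‖A + N‖² ≤ 4ε`. Since `δ ≤ 1`, the total `(8 + 2ε)δ + 4ε` is at most `8(ε + δ)`.
-/

open scoped Norms.Frobenius

theorem frobeniusSq_eq_norm_sq {m n : ℕ} (M : Matrix (Fin m) (Fin n) ℝ) :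
    frobeniusSq M = ‖M‖ ^ 2 := by
  have hsum : 0 ≤ ∑ i, ∑ j, M i j ^ 2 := by positivity
  simp only [frobeniusSq, frobenius_norm_def, ← Real.sqrt_eq_rpow, Real.rpow_two,
    Real.norm_eq_abs, sq_abs, Real.sq_sqrt hsum]

theorem le_sqrt_mul_of_sq_le_mul_sq {x y η : ℝ} (hy : 0 ≤ y) (h : x ^ 2 ≤ η * y ^ 2) :
    x ≤ √η * y := by
  simpa only [Real.sqrt_mul' η (sq_nonneg y), Real.sqrt_sq hy] using Real.le_sqrt_of_sq_le h

section SeminormedAddCommGroup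

variable {E : Type*} [SeminormedAddCommGroup E]

theorem norm_add_sq_le_of_norm_le_mul {x y : E} {a c δ : ℝ} (hδ₀ : 0 ≤ δ) (hδ₁ : δ ≤ 1)
    (hx : ‖x‖ ≤ c * a) (hy : ‖y‖ ≤ δ * a) :
    ‖x + y‖ ^ 2 ≤ ‖x‖ ^ 2 + (2 * c + 1) * δ * a ^ 2 := by
  have hca : 0 ≤ c * a := (norm_nonneg x).trans hx
  have hδ_sq : δ ^ 2 ≤ δ := pow_le_of_le_one hδ₀ hδ₁ two_ne_zero
  calc ‖x + y‖ ^ 2 ≤ (‖x‖ + ‖y‖) ^ 2 := by gcongr; exact norm_add_le x y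
    _ = ‖x‖ ^ 2 + 2 * (‖x‖ * ‖y‖) + ‖y‖ ^ 2 := by ring
    _ ≤ ‖x‖ ^ 2 + 2 * (c * a * (δ * a)) + (δ * a) ^ 2 := by gcongr
    _ = ‖x‖ ^ 2 + 2 * c * δ * a ^ 2 + δ ^ 2 * a ^ 2 := by ring
    _ ≤ ‖x‖ ^ 2 + 2 * c * δ * a ^ 2 + δ * a ^ 2 := by gcongr
    _ = ‖x‖ ^ 2 + (2 * c + 1) * δ * a ^ 2 := by ring

theorem norm_sub_le_of_norm_sub_sq_le {Y B M : E} {r ε : ℝ} (hε : 0 ≤ ε) (hY : ‖Y‖ ≤ r)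
    (hYB : ‖Y - B‖ ≤ r) (hYM : ‖Y - M‖ ^ 2 ≤ ‖Y - B‖ ^ 2 + ε * ‖Y‖ ^ 2) :
    ‖Y - M‖ ≤ (1 + ε / 2) * r := by
  have hr : 0 ≤ r := (norm_nonneg Y).trans hY
  have hsq : ‖Y - M‖ ^ 2 ≤ ((1 + ε / 2) * r) ^ 2 :=
    calc ‖Y - M‖ ^ 2 ≤ ‖Y - B‖ ^ 2 + ε * ‖Y‖ ^ 2 := hYM
      _ ≤ r ^ 2 + ε * r ^ 2 := by gcongr
      _ ≤ r ^ 2 + ε * r ^ 2 + (ε / 2 * r) ^ 2 := le_add_of_nonneg_right (sq_nonneg _)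
      _ = ((1 + ε / 2) * r) ^ 2 := by ring
  exact le_of_sq_le_sq hsq (by positivity)

-- The constant 8 is sharp: take `N = A`, `B = 0`, `M = 4A`, `ε = 0` and `δ = 1`.
theorem robust_additive_error_transfer_general {A N B M : E} {ε δ : ℝ} (hε : 0 ≤ ε)
    (hδ₀ : 0 ≤ δ) (hδ₁ : δ ≤ 1) (hN : ‖N‖ ≤ δ * ‖A‖) (hAB : ‖A - B‖ ≤ ‖A‖)
    (hM : ‖(A + N) - M‖ ^ 2 ≤ ‖(A + N) - B‖ ^ 2 + ε * ‖A + N‖ ^ 2) :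
    ‖A - M‖ ^ 2 ≤ ‖A - B‖ ^ 2 + 8 * (ε + δ) * ‖A‖ ^ 2 := by
  have hB_eq : A + N - B = (A - B) + N := by abel
  have hM_eq : A - M = (A + N - M) + -N := by abel
  have hN_le : ‖N‖ ≤ ‖A‖ := hN.trans (mul_le_of_le_one_left (norm_nonneg A) hδ₁)
  have hAN : ‖A + N‖ ≤ 2 * ‖A‖ := by linarith [norm_add_le A N]
  have hANB : ‖A + N - B‖ ≤ 2 * ‖A‖ := by rw [hB_eq]; linarith [norm_add_le (A - B) N]
  have hANM : ‖A + N - M‖ ≤ (2 + ε) * ‖A‖ :=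
    (norm_sub_le_of_norm_sub_sq_le hε hAN hANB hM).trans_eq (by ring)
  have hB_noise : ‖A + N - B‖ ^ 2 ≤ ‖A - B‖ ^ 2 + 3 * δ * ‖A‖ ^ 2 := by
    rw [hB_eq]
    exact (norm_add_sq_le_of_norm_le_mul hδ₀ hδ₁ (by rwa [one_mul]) hN).trans_eq (by ring)
  have hM_noise : ‖A - M‖ ^ 2 ≤ ‖A + N - M‖ ^ 2 + (5 + 2 * ε) * δ * ‖A‖ ^ 2 := by
    rw [hM_eq]
    exact (norm_add_sq_le_of_norm_le_mul hδ₀ hδ₁ hANM (by rwa [norm_neg])).trans_eq (by ring)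
  calc ‖A - M‖ ^ 2
      ≤ ‖A + N - M‖ ^ 2 + (5 + 2 * ε) * δ * ‖A‖ ^ 2 := hM_noise
    _ ≤ ‖A + N - B‖ ^ 2 + ε * ‖A + N‖ ^ 2 + (5 + 2 * ε) * δ * ‖A‖ ^ 2 := by gcongr
    _ ≤ ‖A - B‖ ^ 2 + 3 * δ * ‖A‖ ^ 2 + ε * (2 * ‖A‖) ^ 2
          + (5 + 2 * ε) * δ * ‖A‖ ^ 2 := by gcongr
    _ = ‖A - B‖ ^ 2 + (8 * δ + 4 * ε + 2 * ε * δ) * ‖A‖ ^ 2 := by ring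
    _ ≤ ‖A - B‖ ^ 2 + 8 * (ε + δ) * ‖A‖ ^ 2 := by
      gcongr
      linarith [mul_le_of_le_one_right hε hδ₁]

end SeminormedAddCommGroup

/-- Additive-error low-rank approximation in the robust model: an additive-error
approximation M to the corrupted matrix A+N is an additive-error approximation to A. -/
theorem robust_additive_error_transfer {n : ℕ} (A N B M : Matrix (Fin n) (Fin n) ℝ)
    (ε η : ℝ) (hε : 0 < ε) (hε1 : ε ≤ 1) (hη : 0 < η) (hη1 : η ≤ 1)
    (hN : frobeniusSq N ≤ η * frobeniusSq A)
    (hAB : Real.sqrt (frobeniusSq (A - B)) ≤ Real.sqrt (frobeniusSq A))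
    (hM : frobeniusSq ((A + N) - M) ≤ frobeniusSq ((A + N) - B) + ε * frobeniusSq (A + N)) :
    frobeniusSq (A - M) ≤ frobeniusSq (A - B) + 16 * (ε + Real.sqrt η) * frobeniusSq A := by
  simp only [frobeniusSq_eq_norm_sq, Real.sqrt_sq (norm_nonneg _)] at hN hAB hM ⊢
  exact (robust_additive_error_transfer_general hε.le (Real.sqrt_nonneg η) (Real.sqrt_le_one.2 hη1)
    (le_sqrt_mul_of_sq_le_mul_sq (norm_nonneg A) hN) hAB hM).trans (by gcongr; norm_num)
end

section
/- Let n ≥ 1 be an integer and let ε, η be reals with 0 < η ≤ ε/2. Let S ⊆ {1,…,n} with |S| ≥ 5ε/η. Define the n×n real matrix M by M_{ii} = 1 for all i, M_{ij} = η·√(n/(5ε)) for all i ≠ j with i ∈ S and j ∈ S, and M_{ij} = 0 otherwise. Then every real n×n matrix B with ‖M − B‖_F² ≤ ε n satisfies ‖B − I‖_F² > 1.1 · ε n, where I is the n×n identity matrix. In particular, no matrix can simultaneously be an additive-error εn approximation (in squared Frobenius norm) to both M and the identity. -/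
open Matrix

/-!
All of the difference `M - I` sits off the diagonal of the `S × S` block, where every entry is
`η √(n / 5ε)`. As `|S| ≥ 5ε / η ≥ 10`, at least `0.9 |S|²` entries are nonzero and
`‖M - I‖² ≥ 0.9 (|S| η)² n / 5ε ≥ 4.5 εn`. Since `‖M - I‖² ≤ 2 (‖M - B‖² + ‖B - I‖²)`, a matrix `B`
with `‖M - B‖² ≤ εn` satisfies `‖B - I‖² ≥ 1.25 εn`.
-/

/-- The matrix equal to the constant `c` at the positions in `T` and to `0` elsewhere. With
`T = S.offDiag` it is the deviation of the hard instance from the identity. -/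
def constOn {m n R : Type*} [DecidableEq m] [DecidableEq n] [Zero R] (T : Finset (m × n)) (c : R) :
    Matrix m n R :=
  of fun i j => if (i, j) ∈ T then c else 0

theorem sub_one_eq_constOn_offDiag {ι R : Type*} [DecidableEq ι] [AddGroupWithOne R]
    {S : Finset ι} {c : R} {M : Matrix ι ι R}
    (hM : ∀ i j, M i j = if i = j then 1 else if i ∈ S ∧ j ∈ S then c else 0) :
    M - 1 = constOn S.offDiag c := by
  ext i j
  by_cases hij : i = j <;> simp [constOn, hM, one_apply, hij, ← and_assoc]

theorem frobeniusSq_add_le {m n : ℕ} (A B : Matrix (Fin m) (Fin n) ℝ) :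
    frobeniusSq (A + B) ≤ 2 * (frobeniusSq A + frobeniusSq B) := by
  simp only [frobeniusSq, ← Finset.sum_add_distrib, Finset.mul_sum]
  exact Finset.sum_le_sum fun i _ => Finset.sum_le_sum fun j _ => add_sq_le

theorem frobeniusSq_sub_le {m n : ℕ} (A B C : Matrix (Fin m) (Fin n) ℝ) :
    frobeniusSq (A - C) ≤ 2 * (frobeniusSq (A - B) + frobeniusSq (B - C)) := by
  simpa only [sub_add_sub_cancel] using frobeniusSq_add_le (A - B) (B - C)

theorem frobeniusSq_constOn {m n : ℕ} (T : Finset (Fin m × Fin n)) (c : ℝ) :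
    frobeniusSq (constOn T c) = T.card * c ^ 2 := by
  simp [frobeniusSq, constOn, ← Fintype.sum_prod_type', ite_pow]

theorem one_sub_inv_mul_card_sq_le_card_offDiag {α : Type*} {S : Finset α} {k : ℝ}
    (hk : 0 < k) (hkS : k ≤ S.card) :
    (1 - k⁻¹) * (S.card : ℝ) ^ 2 ≤ S.offDiag.card := by
  have card_le : (S.card : ℝ) ≤ k⁻¹ * (S.card : ℝ) ^ 2 := by
    rw [le_inv_mul_iff₀ hk, sq]
    gcongr
  rw [Finset.offDiag_card, Nat.cast_sub (Nat.le_mul_self _), Nat.cast_mul]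
  linarith

theorem le_frobeniusSq_constOn_offDiag {n : ℕ} {S : Finset (Fin n)} {k t x η : ℝ}
    (hk : 1 ≤ k) (hkS : k ≤ S.card) (ht : 0 < t) (htS : t ≤ S.card * η) (hx : 0 ≤ x) :
    (1 - k⁻¹) * (t * x) ≤ frobeniusSq (constOn S.offDiag (η * √(x / t))) := by
  have hk' : 0 ≤ 1 - k⁻¹ := sub_nonneg.2 (inv_le_one_of_one_le₀ hk)
  calc (1 - k⁻¹) * (t * x) = (1 - k⁻¹) * (t ^ 2 * (x / t)) := by field_simp
    _ ≤ (1 - k⁻¹) * ((S.card * η) ^ 2 * (x / t)) := by gcongr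
    _ = (1 - k⁻¹) * (S.card : ℝ) ^ 2 * (η ^ 2 * (x / t)) := by ring
    _ ≤ S.offDiag.card * (η ^ 2 * (x / t)) := by
      gcongr
      exact one_sub_inv_mul_card_sq_le_card_offDiag (one_pos.trans_le hk) hkS
    _ = frobeniusSq (constOn S.offDiag (η * √(x / t))) := by
      rw [frobeniusSq_constOn, mul_pow, Real.sq_sqrt (by positivity)]

/-- Hard instance for robust PSD LRA: any additive-error εn approximation of the
corrupted block matrix M is far from the identity. -/
theorem robust_lra_distinguisher {n : ℕ} (hn : 1 ≤ n) (ε η : ℝ)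
    (hη : 0 < η) (hηε : η ≤ ε / 2)
    (S : Finset (Fin n)) (hS : 5 * ε / η ≤ (S.card : ℝ))
    (M : Matrix (Fin n) (Fin n) ℝ)
    (hM : ∀ i j, M i j =
      if i = j then 1
      else if i ∈ S ∧ j ∈ S then η * Real.sqrt ((n : ℝ) / (5 * ε)) else 0)
    (B : Matrix (Fin n) (Fin n) ℝ)
    (hB : frobeniusSq (M - B) ≤ ε * n) :
    1.1 * ε * n < frobeniusSq (B - 1) := by
  have hε : 0 < ε := by linarith
  have ten_le_card : (10 : ℝ) ≤ S.card := by
    refine le_trans ?_ hS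
    rw [le_div_iff₀ hη]
    linarith
  have lower_bound : (1 - 10⁻¹) * (5 * ε * n) ≤ frobeniusSq (M - 1) := by
    rw [sub_one_eq_constOn_offDiag hM]
    exact le_frobeniusSq_constOn_offDiag (by norm_num) ten_le_card (by positivity)
      ((div_le_iff₀ hη).1 hS) n.cast_nonneg
  have upper_bound := frobeniusSq_sub_le M B 1
  have hεn : 0 < ε * n := by positivity
  linarith
end

section
/- Let C ∈ ℝ^{n×m}, let Z ∈ ℝ^{m×d} have orthonormal columns (ZᵀZ = I_d), and let S ∈ ℝ^{m×s} be any matrix such that the symmetric positive semidefinite matrix Zᵀ S Sᵀ Z is invertible with smallest eigenvalue at least 9/10. Define Ŵ = C S Sᵀ Z (Zᵀ S Sᵀ Z)⁻¹ (the minimizer of ‖C S − W Zᵀ S‖₂ over W) and C* = C (I_m − Z Zᵀ). Then ‖C − Ŵ Zᵀ‖₂² ≤ (100/81) · ‖C* S Sᵀ Z‖₂² + ‖C*‖₂². -/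
open Matrix

/-!
Write `T` for `S Sᵀ`, and `Ŵ(C)` for the sketched solution, which is linear in `C` and recovers `B`
exactly from `B Zᴴ`. Splitting `C = C* + (C Z) Zᴴ` with `C* Z = 0`, the second part is therefore
fitted without error, and the residual of `C` is `C* - Ŵ(C*) Zᴴ`. Its two terms have orthogonal row
spaces, so the squared spectral norm is at most `‖C*‖² + ‖Ŵ(C*)‖²`. Finally
`Ŵ(C*) = (C* T Z) (Zᴴ T Z)⁻¹`, where the second factor has norm at most `c⁻¹` as soon as `Zᴴ T Z`
expands every vector by a factor of at least `c`; by Cauchy-Schwarz this holds when `Zᴴ T Z` is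
Hermitian with smallest eigenvalue at least `c`.
-/

section SketchedSolution

variable {R n m d : Type*} [Fintype m] [Fintype d] [DecidableEq d] [CommRing R] [Star R]

/-- The coefficient matrix `Ŵ` of the sketched regression of the rows of `C` on the columns of `Z`.
The sketch enters through its Gram matrix `T`, which is `S Sᵀ` for a sketching matrix `S`. The
nonsingular inverse is `0` when `Zᴴ T Z` is singular. -/
noncomputable def sketchedSolution (C : Matrix n m R) (Z : Matrix m d R) (T : Matrix m m R) :
    Matrix n d R :=
  C * T * Z * (Zᴴ * T * Z)⁻¹

theorem sketchedSolution_add (C D : Matrix n m R) (Z : Matrix m d R) (T : Matrix m m R) :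
    sketchedSolution (C + D) Z T = sketchedSolution C Z T + sketchedSolution D Z T := by
  simp only [sketchedSolution, Matrix.add_mul]

theorem sketchedSolution_mul_conjTranspose (B : Matrix n d R) {Z : Matrix m d R}
    {T : Matrix m m R} (hA : IsUnit (Zᴴ * T * Z)) : sketchedSolution (B * Zᴴ) Z T = B := by
  have hdet : IsUnit (Zᴴ * T * Z).det := (isUnit_iff_isUnit_det _).mp hA
  calc sketchedSolution (B * Zᴴ) Z T
      = B * (Zᴴ * T * Z) * (Zᴴ * T * Z)⁻¹ := by simp only [sketchedSolution, Matrix.mul_assoc]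
    _ = B := mul_nonsing_inv_cancel_right _ _ hdet

theorem sub_sketchedSolution_mul_conjTranspose [DecidableEq m] (C : Matrix n m R)
    {Z : Matrix m d R} {T : Matrix m m R} (hA : IsUnit (Zᴴ * T * Z)) :
    C - sketchedSolution C Z T * Zᴴ =
      C * (1 - Z * Zᴴ) - sketchedSolution (C * (1 - Z * Zᴴ)) Z T * Zᴴ := by
  have hC : C = C * (1 - Z * Zᴴ) + C * Z * Zᴴ := by
    rw [Matrix.mul_sub, Matrix.mul_one, Matrix.mul_assoc, sub_add_cancel]
  have hW : sketchedSolution C Z T = sketchedSolution (C * (1 - Z * Zᴴ)) Z T + C * Z := by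
    conv_lhs => rw [hC]
    rw [sketchedSolution_add, sketchedSolution_mul_conjTranspose _ hA]
  rw [hW, Matrix.add_mul, sub_add_eq_sub_sub_swap, ← eq_sub_of_add_eq hC.symm]

end SketchedSolution

open scoped Matrix.Norms.L2Operator

section SpectralNorm

variable {𝕜 n m d : Type*} [RCLike 𝕜] [Fintype n] [Fintype m] [Fintype d] [DecidableEq m]
  [DecidableEq d]

theorem l2_opNorm_mul_conjTranspose_self [DecidableEq n] (X : Matrix n m 𝕜) :
    ‖X * Xᴴ‖ = ‖X‖ ^ 2 := by
  simpa only [conjTranspose_conjTranspose, l2_opNorm_conjTranspose, ← sq]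
    using l2_opNorm_conjTranspose_mul_self Xᴴ

theorem l2_opNorm_sub_mul_conjTranspose_sq_le {D : Matrix n m 𝕜} {Z : Matrix m d 𝕜}
    (F : Matrix n d 𝕜) (hZ : Zᴴ * Z = 1) (hDZ : D * Z = 0) :
    ‖D - F * Zᴴ‖ ^ 2 ≤ ‖F‖ ^ 2 + ‖D‖ ^ 2 := by
  classical
  have hZD : Zᴴ * Dᴴ = 0 := by rw [← conjTranspose_mul, hDZ, conjTranspose_zero]
  have gram : (D - F * Zᴴ) * (D - F * Zᴴ)ᴴ = F * Fᴴ + D * Dᴴ := by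
    calc (D - F * Zᴴ) * (D - F * Zᴴ)ᴴ
        = D * Dᴴ - D * Z * Fᴴ - F * (Zᴴ * Dᴴ) + F * (Zᴴ * Z) * Fᴴ := by
          simp only [conjTranspose_sub, conjTranspose_mul, conjTranspose_conjTranspose,
            Matrix.mul_sub, Matrix.sub_mul, Matrix.mul_assoc]
          abel
      _ = F * Fᴴ + D * Dᴴ := by
          rw [hDZ, hZD, hZ, Matrix.zero_mul, Matrix.mul_zero, Matrix.mul_one, sub_zero, sub_zero,
            add_comm]
  calc ‖D - F * Zᴴ‖ ^ 2 = ‖F * Fᴴ + D * Dᴴ‖ := by rw [← l2_opNorm_mul_conjTranspose_self, gram]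
    _ ≤ ‖F * Fᴴ‖ + ‖D * Dᴴ‖ := norm_add_le _ _
    _ = ‖F‖ ^ 2 + ‖D‖ ^ 2 := by simp only [l2_opNorm_mul_conjTranspose_self]

theorem isUnit_of_forall_mul_norm_le {A : Matrix d d 𝕜} {c : ℝ} (hc : 0 < c)
    (hA : ∀ x, c * ‖x‖ ≤ ‖toEuclideanCLM (𝕜 := 𝕜) A x‖) : IsUnit A := by
  refine mulVec_injective_iff_isUnit.mp <| (injective_iff_map_eq_zero A.mulVecLin).mpr fun v hv ↦ ?_
  have hAv : toEuclideanCLM (𝕜 := 𝕜) A (WithLp.toLp 2 v) = 0 := by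
    rw [toEuclideanCLM_toLp, ← mulVecLin_apply, hv, WithLp.toLp_zero]
  have hv_norm : c * ‖WithLp.toLp 2 v‖ ≤ 0 := by
    simpa only [hAv, norm_zero] using hA (WithLp.toLp 2 v)
  have hv_zero : WithLp.toLp 2 v = 0 := norm_le_zero_iff.mp (nonpos_of_mul_nonpos_right hv_norm hc)
  exact (WithLp.toLp_eq_zero 2).mp hv_zero

theorem l2_opNorm_inv_le_of_forall_mul_norm_le {A : Matrix d d 𝕜} {c : ℝ} (hc : 0 < c)
    (hA : ∀ x, c * ‖x‖ ≤ ‖toEuclideanCLM (𝕜 := 𝕜) A x‖) : ‖A⁻¹‖ ≤ c⁻¹ := by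
  have hunit : IsUnit A := isUnit_of_forall_mul_norm_le hc hA
  rw [← l2_opNorm_toEuclideanCLM]
  refine ContinuousLinearMap.opNorm_le_bound _ (inv_nonneg.mpr hc.le) fun x ↦ ?_
  have hAx : toEuclideanCLM (𝕜 := 𝕜) A (toEuclideanCLM (𝕜 := 𝕜) A⁻¹ x) = x := by
    rw [← mul_apply_eq_comp, ← map_mul,
      mul_nonsing_inv A ((isUnit_iff_isUnit_det A).mp hunit), map_one,
      one_apply_eq_self]
  rw [le_inv_mul_iff₀ hc]
  simpa only [hAx] using hA (toEuclideanCLM (𝕜 := 𝕜) A⁻¹ x)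

open scoped ComplexOrder in
theorem mul_norm_sq_le_re_inner_of_posSemidef_sub_smul_one {A : Matrix d d 𝕜} {c : ℝ}
    (hA : (A - c • (1 : Matrix d d 𝕜)).PosSemidef) (x : EuclideanSpace 𝕜 d) :
    c * ‖x‖ ^ 2 ≤ RCLike.re (inner 𝕜 (toEuclideanCLM (𝕜 := 𝕜) A x) x) := by
  have hshift : toEuclideanCLM (𝕜 := 𝕜) (A - c • 1) x =
      toEuclideanCLM (𝕜 := 𝕜) A x - (c : 𝕜) • x := by
    rw [RCLike.real_smul_eq_coe_smul (K := 𝕜), map_sub, map_smul, map_one]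
    rfl
  have hnonneg : 0 ≤ RCLike.re (inner 𝕜 (toEuclideanCLM (𝕜 := 𝕜) (A - c • 1) x) x) :=
    (isPositive_toEuclideanLin_iff.mpr hA).re_inner_nonneg_left x
  rwa [hshift, inner_sub_left, inner_smul_left, RCLike.conj_ofReal, map_sub, RCLike.re_ofReal_mul,
    inner_self_eq_norm_sq, sub_nonneg] at hnonneg

open scoped ComplexOrder in
theorem mul_norm_le_norm_toEuclideanCLM_of_posSemidef_sub_smul_one {A : Matrix d d 𝕜} {c : ℝ}
    (hA : (A - c • (1 : Matrix d d 𝕜)).PosSemidef) (x : EuclideanSpace 𝕜 d) :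
    c * ‖x‖ ≤ ‖toEuclideanCLM (𝕜 := 𝕜) A x‖ := by
  rcases eq_or_ne x 0 with rfl | hx
  · simp
  refine le_of_mul_le_mul_right ?_ (norm_pos_iff.mpr hx)
  calc c * ‖x‖ * ‖x‖ = c * ‖x‖ ^ 2 := by ring
    _ ≤ RCLike.re (inner 𝕜 (toEuclideanCLM (𝕜 := 𝕜) A x) x) :=
      mul_norm_sq_le_re_inner_of_posSemidef_sub_smul_one hA x
    _ ≤ ‖toEuclideanCLM (𝕜 := 𝕜) A x‖ * ‖x‖ := re_inner_le_norm _ _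

theorem sketched_spectral_regression_general (C : Matrix n m 𝕜) {Z : Matrix m d 𝕜}
    {T : Matrix m m 𝕜} {c : ℝ} (hc : 0 < c) (hZ : Zᴴ * Z = 1)
    (hT : ∀ x, c * ‖x‖ ≤ ‖toEuclideanCLM (𝕜 := 𝕜) (Zᴴ * T * Z) x‖) :
    ‖C - sketchedSolution C Z T * Zᴴ‖ ^ 2 ≤
      c⁻¹ ^ 2 * ‖C * (1 - Z * Zᴴ) * T * Z‖ ^ 2 + ‖C * (1 - Z * Zᴴ)‖ ^ 2 := by
  rw [sub_sketchedSolution_mul_conjTranspose C (isUnit_of_forall_mul_norm_le hc hT)]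
  have horth : C * (1 - Z * Zᴴ) * Z = 0 := by
    rw [Matrix.mul_assoc, Matrix.sub_mul, Matrix.mul_assoc, hZ, Matrix.one_mul, Matrix.mul_one,
      sub_self, Matrix.mul_zero]
  generalize C * (1 - Z * Zᴴ) = D at horth ⊢
  have hW : ‖sketchedSolution D Z T‖ ≤ c⁻¹ * ‖D * T * Z‖ :=
    calc ‖sketchedSolution D Z T‖ ≤ ‖D * T * Z‖ * ‖(Zᴴ * T * Z)⁻¹‖ := l2_opNorm_mul _ _
      _ ≤ ‖D * T * Z‖ * c⁻¹ := by gcongr; exact l2_opNorm_inv_le_of_forall_mul_norm_le hc hT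
      _ = c⁻¹ * ‖D * T * Z‖ := mul_comm _ _
  calc ‖D - sketchedSolution D Z T * Zᴴ‖ ^ 2
      ≤ ‖sketchedSolution D Z T‖ ^ 2 + ‖D‖ ^ 2 := l2_opNorm_sub_mul_conjTranspose_sq_le _ hZ horth
    _ ≤ (c⁻¹ * ‖D * T * Z‖) ^ 2 + ‖D‖ ^ 2 := by gcongr
    _ = c⁻¹ ^ 2 * ‖D * T * Z‖ ^ 2 + ‖D‖ ^ 2 := by rw [mul_pow]

end SpectralNorm

theorem opNorm2_eq_l2_opNorm {m n : ℕ} (M : Matrix (Fin m) (Fin n) ℝ) : opNorm2 M = ‖M‖ := rfl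

/-- Sketched spectral regression: the minimizer of the sketched problem has spectral
cost bounded in terms of the approximate matrix product term and the optimal cost. -/
theorem sketched_spectral_regression {n m d s : ℕ}
    (C : Matrix (Fin n) (Fin m) ℝ) (Z : Matrix (Fin m) (Fin d) ℝ)
    (S : Matrix (Fin m) (Fin s) ℝ)
    (hZ : Zᵀ * Z = 1)
    (hInv : IsUnit (Zᵀ * S * Sᵀ * Z).det)
    (hEig : ((Zᵀ * S * Sᵀ * Z) - (9/10 : ℝ) • (1 : Matrix (Fin d) (Fin d) ℝ)).PosSemidef) :
    (opNorm2 (C - (C * S * Sᵀ * Z * (Zᵀ * S * Sᵀ * Z)⁻¹) * Zᵀ))^2 ≤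
      (100/81) * (opNorm2 ((C * (1 - Z * Zᵀ)) * S * Sᵀ * Z))^2 +
        (opNorm2 (C * (1 - Z * Zᵀ)))^2 := by
  have hconst : (100 / 81 : ℝ) = (9 / 10)⁻¹ ^ 2 := by norm_num
  simp only [opNorm2_eq_l2_opNorm, Matrix.mul_assoc _ S, hconst] at hEig ⊢
  exact sketched_spectral_regression_general C (by norm_num) hZ
    (mul_norm_le_norm_toEuclideanCLM_of_posSemidef_sub_smul_one hEig)
end
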